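/- Existential elimination theorem: Let K be a quasivariety with the amalgamation property. Then (i) every implicit operation of K defined by a primitive positive formula is interpolated by some implicit operation of K defined by a finite conjunction of equations; and (ii) every implicit operation of K is interpolated by a finite set of implicit operations of K defined by finite conjunctions of equations. -/

import Mathlib

namespace Impl

open FirstOrder Language

universe u v

/-- A bundled algebra (first-order structure) for the language `L`. -/
structure Alg (L : FirstOrder.Language.{u, u}) : Type (u + 1) where
  carrier : Type u
  [str : L.Structure carrier]

attribute [instance] Alg.str

variable {L : FirstOrder.Language.{u, u}}

/-- The direct product of a family of algebras. -/
def Alg.pi {ι : Type u} (A : ι → Alg L) : Alg L where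
  carrier := ∀ i, (A i).carrier
  str :=
    { funMap := fun {k} f v i => Structure.funMap f fun j => v j i
      RelMap := fun {k} r v => ∀ i, Structure.RelMap r fun j => v j i }

/-- The binary direct product of two algebras. -/
def Alg.prod (A B : Alg L) : Alg L where
  carrier := A.carrier × B.carrier
  str :=
    { funMap := fun {k} f v =>
        (Structure.funMap f fun j => (v j).1, Structure.funMap f fun j => (v j).2)
      RelMap := fun {k} r v =>
        Structure.RelMap r (fun j => (v j).1) ∧ Structure.RelMap r fun j => (v j).2 }

/-- The ultraproduct of a family of algebras with respect to an ultrafilter. -/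
def Alg.uprod {ι : Type u} (F : Ultrafilter ι) (A : ι → Alg L) : Alg L where
  carrier := Filter.Product (F : Filter ι) fun i => (A i).carrier
  str := inferInstance

/-- Closure under isomorphic copies. -/
def ClosedUnderIso (K : Set (Alg L)) : Prop :=
  ∀ A B : Alg L, A ∈ K → Nonempty (A.carrier ≃[L] B.carrier) → B ∈ K

/-- Closure under subalgebras (up to the identification of a subalgebra with an embedding). -/
def ClosedUnderSub (K : Set (Alg L)) : Prop :=
  ∀ A B : Alg L, B ∈ K → Nonempty (A.carrier ↪[L] B.carrier) → A ∈ K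

/-- Closure under direct products. -/
def ClosedUnderProd (K : Set (Alg L)) : Prop :=
  ∀ (ι : Type u) (A : ι → Alg L), (∀ i, A i ∈ K) → Alg.pi A ∈ K

/-- Closure under finite direct products. -/
def ClosedUnderFinProd (K : Set (Alg L)) : Prop :=
  ∀ (ι : Type u), Finite ι → ∀ A : ι → Alg L, (∀ i, A i ∈ K) → Alg.pi A ∈ K

/-- Closure under homomorphic images. -/
def ClosedUnderHomImg (K : Set (Alg L)) : Prop :=
  ∀ A B : Alg L, A ∈ K → ∀ h : A.carrier →[L] B.carrier, Function.Surjective h → B ∈ K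

/-- Closure under ultraproducts. -/
def ClosedUnderUprod (K : Set (Alg L)) : Prop :=
  ∀ (ι : Type u) (F : Ultrafilter ι) (A : ι → Alg L), (∀ i, A i ∈ K) → Alg.uprod F A ∈ K

/-- A universal class: a class closed under isomorphic copies, subalgebras and ultraproducts. -/
def IsUniversalClass (K : Set (Alg L)) : Prop :=
  ClosedUnderIso K ∧ ClosedUnderSub K ∧ ClosedUnderUprod K

/-- A quasivariety: a class closed under isomorphic copies, subalgebras, direct products and
ultraproducts. -/
def IsQuasivariety (K : Set (Alg L)) : Prop :=
  ClosedUnderIso K ∧ ClosedUnderSub K ∧ ClosedUnderProd K ∧ ClosedUnderUprod K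

/-- A variety: a class closed under homomorphic images, subalgebras and direct products. -/
def IsVariety (K : Set (Alg L)) : Prop :=
  ClosedUnderHomImg K ∧ ClosedUnderSub K ∧ ClosedUnderProd K

/-- The least quasivariety containing `K`. -/
def QGen (K : Set (Alg L)) : Set (Alg L) :=
  ⋂₀ { M : Set (Alg L) | IsQuasivariety M ∧ K ⊆ M }

/-- The least variety containing `K`. -/
def VGen (K : Set (Alg L)) : Set (Alg L) :=
  ⋂₀ { M : Set (Alg L) | IsVariety M ∧ K ⊆ M }

/-- An elementary class: the class of all models of some first-order theory. -/
def IsElementary (K : Set (Alg L)) : Prop :=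
  ∃ T : L.Theory, ∀ A : Alg L, A ∈ K ↔ ∀ φ ∈ T, A.carrier ⊨ φ

/-- Finite conjunctions of equations (with `⊤` as the empty conjunction). -/
inductive IsConjEq {α : Type v} : ∀ {k : ℕ}, L.BoundedFormula α k → Prop
  | top {k} : IsConjEq (⊤ : L.BoundedFormula α k)
  | equal {k} (t₁ t₂ : L.Term (α ⊕ Fin k)) : IsConjEq (BoundedFormula.equal t₁ t₂)
  | inf {k} {φ ψ : L.BoundedFormula α k} : IsConjEq φ → IsConjEq ψ → IsConjEq (φ ⊓ ψ)

/-- Positive quantifier-free formulas: built from equations, `⊤` and `⊥` using `⊓` and `⊔`. -/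
inductive IsPosQF {α : Type v} : ∀ {k : ℕ}, L.BoundedFormula α k → Prop
  | falsum {k} : IsPosQF (⊥ : L.BoundedFormula α k)
  | top {k} : IsPosQF (⊤ : L.BoundedFormula α k)
  | equal {k} (t₁ t₂ : L.Term (α ⊕ Fin k)) : IsPosQF (BoundedFormula.equal t₁ t₂)
  | inf {k} {φ ψ : L.BoundedFormula α k} : IsPosQF φ → IsPosQF ψ → IsPosQF (φ ⊓ ψ)
  | sup {k} {φ ψ : L.BoundedFormula α k} : IsPosQF φ → IsPosQF ψ → IsPosQF (φ ⊔ ψ)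

/-- Primitive positive (pp) formulas: existentially quantified finite conjunctions of
equations. -/
inductive IsPP {α : Type v} : ∀ {k : ℕ}, L.BoundedFormula α k → Prop
  | of_conjEq {k} {φ : L.BoundedFormula α k} : IsConjEq φ → IsPP φ
  | ex {k} {φ : L.BoundedFormula α (k + 1)} : IsPP φ → IsPP φ.ex

/-- Existential positive formulas: existentially quantified positive quantifier-free
formulas. -/
inductive IsExistPos {α : Type v} : ∀ {k : ℕ}, L.BoundedFormula α k → Prop
  | of_posQF {k} {φ : L.BoundedFormula α k} : IsPosQF φ → IsExistPos φ
  | ex {k} {φ : L.BoundedFormula α (k + 1)} : IsExistPos φ → IsExistPos φ.ex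

/-- Two formulas are equivalent in a class of algebras. -/
def EquivOn (K : Set (Alg L)) {α : Type v} (φ ψ : L.Formula α) : Prop :=
  ∀ A : Alg L, A ∈ K → ∀ x : α → A.carrier, φ.Realize x ↔ ψ.Realize x

/-- A formula is preserved by homomorphisms in `K`. -/
def PreservedByHomsOn (K : Set (Alg L)) {α : Type v} (φ : L.Formula α) : Prop :=
  ∀ A B : Alg L, A ∈ K → B ∈ K → ∀ (h : A.carrier →[L] B.carrier) (x : α → A.carrier),
    φ.Realize x → φ.Realize fun a => h (x a)

/-- A formula is preserved by direct products in `K`. -/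
def PreservedByProdsOn (K : Set (Alg L)) {α : Type v} (φ : L.Formula α) : Prop :=
  ∀ (ι : Type u) (A : ι → Alg L), (∀ i, A i ∈ K) → ∀ x : α → (Alg.pi A).carrier,
    (∀ i, φ.Realize fun a => x a i) → φ.Realize x

/-- An `n`-ary partial function on a class of algebras `K`: a family assigning to each member of
`K` an `n`-ary partial function on its carrier. -/
def PartialFunOn (K : Set (Alg L)) (n : ℕ) :=
  ∀ (A : Alg L), A ∈ K → ((Fin n → A.carrier) →. A.carrier)

/-- A partial function on `K` is defined by the formula `φ(x₁, …, xₙ, y)` (the last variable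
being the output) when its graph on each member of `K` is the solution set of `φ`. -/
def DefinedBy {K : Set (Alg L)} {n : ℕ} (f : PartialFunOn K n)
    (φ : L.Formula (Fin (n + 1))) : Prop :=
  ∀ (A : Alg L) (hA : A ∈ K) (x : Fin n → A.carrier) (b : A.carrier),
    b ∈ f A hA x ↔ φ.Realize (Fin.snoc x b)

/-- The formula `φ(x₁, …, xₙ, y)` is functional in `K`: for all inputs there is at most one
output satisfying it. -/
def FunctionalIn (K : Set (Alg L)) {n : ℕ} (φ : L.Formula (Fin (n + 1))) : Prop :=
  ∀ A : Alg L, A ∈ K → ∀ (x : Fin n → A.carrier) (b₁ b₂ : A.carrier),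
    φ.Realize (Fin.snoc x b₁) → φ.Realize (Fin.snoc x b₂) → b₁ = b₂

/-- A partial function on `K` is an operation of `K` when it is preserved by all homomorphisms
between members of `K`. -/
def IsOperationOn {K : Set (Alg L)} {n : ℕ} (f : PartialFunOn K n) : Prop :=
  ∀ (A B : Alg L) (hA : A ∈ K) (hB : B ∈ K) (h : A.carrier →[L] B.carrier)
    (x : Fin n → A.carrier) (b : A.carrier),
    b ∈ f A hA x → h b ∈ f B hB fun i => h (x i)

/-- A partial function on `K` is implicit when it is defined by some formula. -/
def IsImplicit {K : Set (Alg L)} {n : ℕ} (f : PartialFunOn K n) : Prop :=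
  ∃ φ : L.Formula (Fin (n + 1)), DefinedBy f φ

/-- An implicit operation of `K`: a partial function that is both implicit and an operation. -/
def IsImplicitOp {K : Set (Alg L)} {n : ℕ} (f : PartialFunOn K n) : Prop :=
  IsImplicit f ∧ IsOperationOn f

/-- An implicit operation is extendable when every tuple in every member of `K` lies in the
domain of the operation in some extension inside `K`. -/
def Extendable {K : Set (Alg L)} {n : ℕ} (f : PartialFunOn K n) : Prop :=
  ∀ (A : Alg L) (hA : A ∈ K) (x : Fin n → A.carrier),
    ∃ (B : Alg L) (hB : B ∈ K) (e : A.carrier ↪[L] B.carrier),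
      (f B hB fun i => e (x i)).Dom

/-- The dominion of a subset `s` of `M` relative to the class `K`. -/
def dominion (K : Set (Alg L)) (M : Type u) [L.Structure M] (s : Set M) : Set M :=
  { b | ∀ C : Alg L, C ∈ K → ∀ g h : M →[L] C.carrier, (∀ a ∈ s, g a = h a) → g b = h b }

/-- The strong epimorphism surjectivity property. -/
def StrongES (K : Set (Alg L)) : Prop :=
  ∀ (A B : Alg L), A ∈ K → B ∈ K → ∀ (f : A.carrier →[L] B.carrier) (b : B.carrier),
    b ∉ Set.range f →
      ∃ C : Alg L, C ∈ K ∧ ∃ g h : B.carrier →[L] C.carrier,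
        (∀ a : A.carrier, g (f a) = h (f a)) ∧ g b ≠ h b

/-- The weak epimorphism surjectivity property: every `K`-epimorphism between finitely
generated members of `K` is surjective. -/
def WeakES (K : Set (Alg L)) : Prop :=
  ∀ (A B : Alg L), A ∈ K → B ∈ K →
    Structure.FG L A.carrier → Structure.FG L B.carrier →
      ∀ f : A.carrier →[L] B.carrier,
        (∀ C : Alg L, C ∈ K → ∀ g h : B.carrier →[L] C.carrier,
          (∀ a : A.carrier, g (f a) = h (f a)) → g = h) →
        Function.Surjective f

/-- The amalgamation property. -/
def HasAmalgamation (K : Set (Alg L)) : Prop :=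
  ∀ (A B C : Alg L), A ∈ K → B ∈ K → C ∈ K →
    ∀ (f : A.carrier ↪[L] B.carrier) (g : A.carrier ↪[L] C.carrier),
      ∃ D : Alg L, D ∈ K ∧ ∃ (f' : B.carrier ↪[L] D.carrier) (g' : C.carrier ↪[L] D.carrier),
        ∀ a : A.carrier, f' (f a) = g' (g a)

/-- A finitely presented member of `K`: an algebra in `K` with a finite presentation, phrased
through the usual universal property of `T(X)/Cg_K(Y)`. -/
def FinitelyPresentedIn (K : Set (Alg L)) (B : Alg L) : Prop :=
  B ∈ K ∧ ∃ (m : ℕ) (Y : Finset (L.Term (Fin m) × L.Term (Fin m))) (b : Fin m → B.carrier),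
    Substructure.closure L (Set.range b) = ⊤ ∧
    (∀ p ∈ Y, p.1.realize b = p.2.realize b) ∧
    ∀ C : Alg L, C ∈ K → ∀ x : Fin m → C.carrier,
      (∀ p ∈ Y, p.1.realize x = p.2.realize x) →
        ∃ g : B.carrier →[L] C.carrier, ∀ i, g (b i) = x i

/-- Subdirectly irreducible relative to `K`. -/
def IsRSI (K : Set (Alg L)) (A : Alg L) : Prop :=
  A ∈ K ∧ ∀ (ι : Type u) (B : ι → Alg L), (∀ i, B i ∈ K) →
    ∀ h : A.carrier ↪[L] (Alg.pi B).carrier,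
      (∀ i, Function.Surjective fun a => h a i) →
        ∃ i, Function.Bijective fun a => h a i

/-- Finitely subdirectly irreducible relative to `K`. -/
def IsRFSI (K : Set (Alg L)) (A : Alg L) : Prop :=
  A ∈ K ∧ ∀ (ι : Type u), Finite ι → ∀ B : ι → Alg L, (∀ i, B i ∈ K) →
    ∀ h : A.carrier ↪[L] (Alg.pi B).carrier,
      (∀ i, Function.Surjective fun a => h a i) →
        ∃ i, Function.Bijective fun a => h a i

/-- A congruence on an algebra: an equivalence relation compatible with all the operations. -/
def IsCongruenceOn (A : Alg L) (θ : A.carrier → A.carrier → Prop) : Prop :=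
  Equivalence θ ∧
    ∀ (k : ℕ) (f : L.Functions k) (x y : Fin k → A.carrier),
      (∀ i, θ (x i) (y i)) → θ (Structure.funMap f x) (Structure.funMap f y)

/-- The quotient of an algebra by (the setoid of) an equivalence relation; when the relation is
a congruence this is the quotient algebra. -/
noncomputable def Alg.quot (A : Alg L) (θ : A.carrier → A.carrier → Prop) (h : Equivalence θ) :
    Alg L where
  carrier := Quotient (⟨θ, h⟩ : Setoid A.carrier)
  str :=
    { funMap := fun {k} f v => Quotient.mk _ (Structure.funMap f fun i => (v i).out)
      RelMap := fun {k} r v => Structure.RelMap r fun i => (v i).out }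

/-- A `K`-congruence of `A`: a congruence whose quotient lies in `K`. -/
def IsRelCong (K : Set (Alg L)) (A : Alg L) (θ : A.carrier → A.carrier → Prop) : Prop :=
  ∃ h : IsCongruenceOn A θ, Alg.quot A θ h.1 ∈ K

/-- The join of two relations in the lattice of `K`-congruences of `A`. -/
def relCongJoin (K : Set (Alg L)) (A : Alg L)
    (θ φ : A.carrier → A.carrier → Prop) (x y : A.carrier) : Prop :=
  ∀ ρ : A.carrier → A.carrier → Prop, IsRelCong K A ρ →
    (∀ a b, θ a b → ρ a b) → (∀ a b, φ a b → ρ a b) → ρ x y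

/-- Relative congruence distributivity: the lattice of `K`-congruences of each member of `K`
is distributive. -/
def RelCongDistributive (K : Set (Alg L)) : Prop :=
  ∀ A : Alg L, A ∈ K → ∀ θ φ ψ : A.carrier → A.carrier → Prop,
    IsRelCong K A θ → IsRelCong K A φ → IsRelCong K A ψ →
      ∀ x y : A.carrier,
        (θ x y ∧ relCongJoin K A φ ψ x y) ↔
          relCongJoin K A (fun a b => θ a b ∧ φ a b) (fun a b => θ a b ∧ ψ a b) x y

/-- The join of two relations in the lattice of congruences of `A`. -/
def congJoin (A : Alg L) (θ φ : A.carrier → A.carrier → Prop) (x y : A.carrier) : Prop :=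
  ∀ ρ : A.carrier → A.carrier → Prop, IsCongruenceOn A ρ →
    (∀ a b, θ a b → ρ a b) → (∀ a b, φ a b → ρ a b) → ρ x y

/-- Congruence permutability for all members of a class. -/
def CongPermutableClass (K : Set (Alg L)) : Prop :=
  ∀ A : Alg L, A ∈ K → ∀ θ φ : A.carrier → A.carrier → Prop,
    IsCongruenceOn A θ → IsCongruenceOn A φ →
      ∀ x y : A.carrier, (∃ z, θ x z ∧ φ z y) ↔ ∃ z, φ x z ∧ θ z y

/-- Congruence distributivity for all members of a class. -/
def CongDistributiveClass (K : Set (Alg L)) : Prop :=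
  ∀ A : Alg L, A ∈ K → ∀ θ φ ψ : A.carrier → A.carrier → Prop,
    IsCongruenceOn A θ → IsCongruenceOn A φ → IsCongruenceOn A ψ →
      ∀ x y : A.carrier,
        (θ x y ∧ congJoin A φ ψ x y) ↔
          congJoin A (fun a b => θ a b ∧ φ a b) (fun a b => θ a b ∧ ψ a b) x y

/-- The congruence extension property. -/
def HasCEP (K : Set (Alg L)) : Prop :=
  ∀ A B : Alg L, A ∈ K → B ∈ K → ∀ e : A.carrier ↪[L] B.carrier,
    ∀ θ : A.carrier → A.carrier → Prop, IsCongruenceOn A θ →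
      ∃ ρ : B.carrier → B.carrier → Prop, IsCongruenceOn B ρ ∧
        ∀ x y : A.carrier, θ x y ↔ ρ (e x) (e y)

/-- The language consisting of one new function symbol `gᵢ` of arity `ar i` for each `i`. -/
def newLang {ι : Type u} (ar : ι → ℕ) : FirstOrder.Language.{u, u} where
  Functions := fun n => { i : ι // ar i = n }
  Relations := fun _ => PEmpty

/-- The `L`-reduct of an algebra in an expanded language `L.sum N`. -/
def algReduct {N : FirstOrder.Language.{u, u}} (B : Alg (L.sum N)) : Alg L where
  carrier := B.carrier
  str := (LHom.sumInl : L →ᴸ L.sum N).reduct B.carrier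

/-- The class `K[L_F]` of expansions of members of `K` on which each operation in the family
`f` is total, interpreting the new symbol `gᵢ` as `f i`. -/
def expClass (K : Set (Alg L)) {ι : Type u} (ar : ι → ℕ)
    (f : ∀ i, PartialFunOn K (ar i)) : Set (Alg (L.sum (newLang ar))) :=
  { B | ∃ hB : algReduct B ∈ K,
      ∀ (i : ι) (x : Fin (ar i) → B.carrier),
        Structure.funMap (L := L.sum (newLang ar)) (M := B.carrier)
            (Sum.inr ⟨i, rfl⟩ : (L.sum (newLang ar)).Functions (ar i)) x
          ∈ f i (algReduct B) hB x }

/-- Closure under subalgebras (and isomorphic copies) inside a fixed language. -/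
def SClosure {L' : FirstOrder.Language.{u, u}} (S : Set (Alg L')) : Set (Alg L') :=
  { A | ∃ B ∈ S, Nonempty (A.carrier ↪[L'] B.carrier) }

/-- Membership in `ext_pp(K)`: an extendable implicit operation defined by a pp formula. -/
def InExtPP {K : Set (Alg L)} {n : ℕ} (f : PartialFunOn K n) : Prop :=
  IsOperationOn f ∧ (∃ φ : L.Formula (Fin (n + 1)), IsPP φ ∧ DefinedBy f φ) ∧ Extendable f

/-- `M` is the pp expansion of `K` induced by the family `f` of extendable pp-definable
implicit operations, with one new symbol of arity `ar i` for each `i`. -/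
def IsPPExpansionVia (K : Set (Alg L)) {ι : Type u} (ar : ι → ℕ)
    (f : ∀ i, PartialFunOn K (ar i)) (M : Set (Alg (L.sum (newLang ar)))) : Prop :=
  (∀ i, 0 < ar i) ∧ (∀ i, InExtPP (f i)) ∧ M = SClosure (expClass K ar f)

/-- Every implicit operation of `K` is interpolated in `M` by a set of terms of the expanded
language. -/
def InterpolatesByTermsInExp (K : Set (Alg L)) {ι : Type u} {ar : ι → ℕ}
    (M : Set (Alg (L.sum (newLang ar)))) : Prop :=
  ∀ n : ℕ, 0 < n → ∀ g : PartialFunOn K n, IsImplicitOp g →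
    ∃ T : Set ((L.sum (newLang ar)).Term (Fin n)),
      ∀ A : Alg (L.sum (newLang ar)), A ∈ M →
        ∀ (hA : algReduct A ∈ K) (x : Fin n → A.carrier) (b : A.carrier),
          b ∈ g (algReduct A) hA x → ∃ t ∈ T, t.realize x = b

/-- `M` is a Beth companion of `K` (via the given expansion datum). -/
def IsBethCompanionVia (K : Set (Alg L)) {ι : Type u} (ar : ι → ℕ)
    (f : ∀ i, PartialFunOn K (ar i)) (M : Set (Alg (L.sum (newLang ar)))) : Prop :=
  IsPPExpansionVia K ar f M ∧ InterpolatesByTermsInExp K M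

/-- A pp expansion is congruence preserving when the `M`-congruences of each member of `M`
coincide with the `K`-congruences of its `L`-reduct. -/
def CongPreserving {N : FirstOrder.Language.{u, u}} (K : Set (Alg L))
    (M : Set (Alg (L.sum N))) : Prop :=
  ∀ A : Alg (L.sum N), A ∈ M → ∀ θ : A.carrier → A.carrier → Prop,
    IsRelCong M A θ ↔ IsRelCong K (algReduct A) θ

/-- Reinterpretation of an `L₁`-algebra as an `L₂`-algebra along a map sending `L₂`-symbols to
`L₁`-terms (both languages are assumed to be purely functional). -/
def reinterpret {L₁ L₂ : FirstOrder.Language.{u, u}} (ρ : ∀ n, L₂.Functions n → L₁.Term (Fin n))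
    (A : Alg L₁) : Alg L₂ where
  carrier := A.carrier
  str :=
    { funMap := fun {k} s x => (ρ k s).realize x
      RelMap := fun {k} _ _ => False }

/-- Two expansions of the same base language `L` are faithfully term equivalent relative to
`L`. -/
def FaithfullyTermEquivRel (L : FirstOrder.Language.{u, u}) {N₁ N₂ : FirstOrder.Language.{u, u}}
    (M₁ : Set (Alg (L.sum N₁))) (M₂ : Set (Alg (L.sum N₂))) : Prop :=
  ∃ (τ : ∀ n, (L.sum N₁).Functions n → (L.sum N₂).Term (Fin n))
    (ρ : ∀ n, (L.sum N₂).Functions n → (L.sum N₁).Term (Fin n)),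
    (∀ (n : ℕ) (s : L.Functions n),
      τ n (Sum.inl s) = Term.func (Sum.inl s : (L.sum N₂).Functions n) Term.var) ∧
    (∀ (n : ℕ) (s : L.Functions n),
      ρ n (Sum.inl s) = Term.func (Sum.inl s : (L.sum N₁).Functions n) Term.var) ∧
    (∀ A : Alg (L.sum N₁), A ∈ M₁ → reinterpret ρ A ∈ M₂) ∧
    (∀ B : Alg (L.sum N₂), B ∈ M₂ → reinterpret τ B ∈ M₁) ∧
    (∀ A : Alg (L.sum N₁), A ∈ M₁ → reinterpret τ (reinterpret ρ A) = A) ∧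
    (∀ B : Alg (L.sum N₂), B ∈ M₂ → reinterpret ρ (reinterpret τ B) = B)

section Helpers

variable {L : FirstOrder.Language.{u, u}}

/-- Functionality phrased through valuations of all `n + 1` variables. -/
def Functional (K : Set (Alg L)) {n : ℕ} (φ : L.Formula (Fin (n + 1))) : Prop :=
  ∀ A : Alg L, A ∈ K → ∀ v w : Fin (n + 1) → A.carrier,
    (∀ i : Fin n, v i.castSucc = w i.castSucc) → φ.Realize v → φ.Realize w →
      v (Fin.last n) = w (Fin.last n)

theorem conjEq_hom {α : Type v} {k : ℕ} {φ : L.BoundedFormula α k} (hφ : IsConjEq φ)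
    {M N : Type u} [L.Structure M] [L.Structure N] (h : M →[L] N) (x : α → M) (y : Fin k → M)
    (H : φ.Realize x y) : φ.Realize (fun a => h (x a)) (fun a => h (y a)) := by
  induction hφ with
  | top => simp
  | equal t₁ t₂ =>
    have H' : t₁.realize (Sum.elim x y) = t₂.realize (Sum.elim x y) := H
    change t₁.realize (Sum.elim _ _) = t₂.realize (Sum.elim _ _)
    have e : (Sum.elim (fun a => h (x a)) fun a => h (y a)) = h ∘ Sum.elim x y := by
      funext i; cases i <;> rfl
    rw [e, HomClass.realize_term, HomClass.realize_term, H']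
  | inf _ _ ih₁ ih₂ =>
    rw [BoundedFormula.realize_inf] at *
    exact ⟨ih₁ H.1, ih₂ H.2⟩

theorem conjEq_hom_formula {α : Type v} {φ : L.Formula α} (hφ : IsConjEq φ)
    {M N : Type u} [L.Structure M] [L.Structure N] (h : M →[L] N) (x : α → M)
    (H : φ.Realize x) : φ.Realize (fun a => h (x a)) := by
  have := conjEq_hom hφ h x _ H
  unfold Formula.Realize
  convert this

/-- The projection homomorphism of a product. -/
def piProj [L.IsAlgebraic] {ι : Type u} (A : ι → Alg L) (i : ι) :
    (Alg.pi A).carrier →[L] (A i).carrier where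
  toFun f := f i
  map_fun' _ _ := rfl
  map_rel' r := isEmptyElim r

theorem pi_realize [L.IsAlgebraic] {ι : Type u} (A : ι → Alg L) {α : Type v} (t : L.Term α)
    (x : α → (Alg.pi A).carrier) (i : ι) :
    (t.realize x : (Alg.pi A).carrier) i = t.realize (fun a => x a i) :=
  (HomClass.realize_term (piProj A i) (t := t) (v := x)).symm

theorem pp_pi [L.IsAlgebraic] {ι : Type u} (A : ι → Alg L) {α : Type v} {k : ℕ}
    {φ : L.BoundedFormula α k} (hφ : IsPP φ)
    (x : α → (Alg.pi A).carrier) (y : Fin k → (Alg.pi A).carrier)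
    (H : ∀ i, φ.Realize (fun a => x a i) (fun a => y a i)) : φ.Realize x y := by
  induction hφ with
  | of_conjEq hφ =>
    induction hφ with
    | top => simp
    | equal t₁ t₂ =>
      change t₁.realize (Sum.elim _ _) = t₂.realize (Sum.elim _ _)
      funext i
      have H' : t₁.realize (Sum.elim (fun a => x a i) (fun a => y a i)) =
        t₂.realize (Sum.elim (fun a => x a i) (fun a => y a i)) := H i
      rw [pi_realize, pi_realize]
      convert H' using 2 <;> (funext j; cases j <;> rfl)
    | inf _ _ ih₁ ih₂ =>
      simp only [BoundedFormula.realize_inf] at *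
      exact ⟨ih₁ fun i => (H i).1, ih₂ fun i => (H i).2⟩
  | ex _ ih =>
    simp only [BoundedFormula.realize_ex] at *
    choose z hz using H
    refine ⟨z, ih _ fun i => ?_⟩
    convert hz i using 1
    funext j
    refine Fin.lastCases ?_ (fun j => ?_) j
    · exact (congrFun (Fin.snoc_last (α := fun _ => (Alg.pi A).carrier) z y) i).trans
        (Fin.snoc_last (α := fun _ => (A i).carrier) (z i) (fun a => y a i)).symm
    · exact (congrFun (Fin.snoc_castSucc (α := fun _ => (Alg.pi A).carrier) z y j) i).trans
        (Fin.snoc_castSucc (α := fun _ => (A i).carrier) (z i) (fun a => y a i) j).symm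

theorem prod_mem [L.IsAlgebraic] {K : Set (Alg L)} (hK : IsQuasivariety K) {A B : Alg L}
    (hA : A ∈ K) (hB : B ∈ K) : Alg.prod A B ∈ K := by
  let F : ULift.{u} Bool → Alg L := fun i => match i with
    | ⟨true⟩ => A
    | ⟨false⟩ => B
  have hF : Alg.pi F ∈ K := hK.2.2.1 _ F (by rintro ⟨_ | _⟩ <;> assumption)
  let h : (Alg.prod A B).carrier →[L] (Alg.pi F).carrier :=
    { toFun := fun p i => match i with
        | ⟨true⟩ => p.1
        | ⟨false⟩ => p.2
      map_fun' := by
        intro n f x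
        funext i
        rcases i with ⟨_ | _⟩ <;> rfl
      map_rel' := fun r => isEmptyElim r }
  refine hK.2.1 _ _ hF ⟨Embedding.ofInjective (f := h) ?_⟩
  intro p q hpq
  exact Prod.ext (congrFun hpq ⟨true⟩) (congrFun hpq ⟨false⟩)

/-- Pairing into the binary product. -/
def prodMk {A B : Alg L} (a : A.carrier) (b : B.carrier) : (Alg.prod A B).carrier := (a, b)

def prodFst [L.IsAlgebraic] (A B : Alg L) : (Alg.prod A B).carrier →[L] A.carrier where
  toFun p := p.1
  map_fun' _ _ := rfl
  map_rel' r := isEmptyElim r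

def prodSnd [L.IsAlgebraic] (A B : Alg L) : (Alg.prod A B).carrier →[L] B.carrier where
  toFun p := p.2
  map_fun' _ _ := rfl
  map_rel' r := isEmptyElim r

/-- Amalgamation over the subalgebras generated by two tuples satisfying the same equations. -/
theorem amalg [L.IsAlgebraic] {K : Set (Alg L)} (hK : IsQuasivariety K) (hAP : HasAmalgamation K)
    {M N : Alg L} (hM : M ∈ K) (hN : N ∈ K) {X : Type} (e : X → M.carrier) (f : X → N.carrier)
    (h : ∀ t s : L.Term X, t.realize e = s.realize e ↔ t.realize f = s.realize f) :
    ∃ D : Alg L, D ∈ K ∧ ∃ (g : M.carrier ↪[L] D.carrier) (g' : N.carrier ↪[L] D.carrier),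
      ∀ x, g (e x) = g' (f x) := by
  let S : L.Substructure M.carrier :=
    { carrier := Set.range fun t : L.Term X => t.realize e
      fun_mem := by
        intro n F x hx
        choose t ht using hx
        refine ⟨Term.func F t, ?_⟩
        simp only [Term.realize_func]
        congr 1
        funext i
        exact ht i }
  let A : Alg L := ⟨S⟩
  have hS : ∀ a : S, ∃ t : L.Term X, t.realize e = (a : M.carrier) := fun a => a.2
  choose T hT using hS
  have hA : A ∈ K := hK.2.1 _ _ hM ⟨S.subtype⟩
  let j : A.carrier →[L] N.carrier :=
    { toFun := fun a => (T a).realize f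
      map_fun' := by
        intro n F x
        have : (T (Structure.funMap F x)).realize f = (Term.func F fun i => T (x i)).realize f := by
          rw [← h, hT]
          simp only [Term.realize_func, hT]
          rfl
        exact this
      map_rel' := fun r => isEmptyElim r }
  have hj : Function.Injective j := by
    intro a b hab
    have : (T a).realize f = (T b).realize f := hab
    rw [← h, hT, hT] at this
    exact Subtype.ext this
  obtain ⟨D, hD, g, g', hg⟩ := hAP A M N hA hM hN S.subtype (Embedding.ofInjective hj)
  refine ⟨D, hD, g, g', fun x => ?_⟩
  let a : A.carrier := ⟨e x, Term.var x, rfl⟩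
  have h1 := hg a
  have h2 : (T a).realize f = (Term.var x : L.Term X).realize f := by
    rw [← h, hT]; rfl
  have h3 : Embedding.ofInjective hj a = f x := h2
  rw [h3] at h1
  exact h1

/-- The equational type of a tuple in the graph of the operation is functional. -/
theorem type_functional [L.IsAlgebraic] {K : Set (Alg L)} (hK : IsQuasivariety K)
    (hAP : HasAmalgamation K) {n : ℕ} {φ : L.Formula (Fin (n + 1))} (hf : Functional K φ)
    (hp : PreservedByHomsOn K φ) {A : Alg L} (hA : A ∈ K) (v : Fin (n + 1) → A.carrier)
    (hv : φ.Realize v) {B : Alg L} (hB : B ∈ K) (w₁ w₂ : Fin (n + 1) → B.carrier)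
    (hw : ∀ i : Fin n, w₁ i.castSucc = w₂ i.castSucc)
    (h₁ : ∀ t s : L.Term (Fin (n + 1)), t.realize v = s.realize v → t.realize w₁ = s.realize w₁)
    (h₂ : ∀ t s : L.Term (Fin (n + 1)), t.realize v = s.realize v → t.realize w₂ = s.realize w₂) :
    w₁ (Fin.last n) = w₂ (Fin.last n) := by
  have hQ := prod_mem hK hA hB
  have key : ∀ w : Fin (n + 1) → B.carrier,
      (∀ t s : L.Term (Fin (n + 1)), t.realize v = s.realize v → t.realize w = s.realize w) →
      ∀ t s : L.Term (Fin (n + 1)), t.realize v = s.realize v ↔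
        t.realize (fun i => prodMk (v i) (w i)) =
          s.realize (fun i => prodMk (v i) (w i)) := by
    intro w hw t s
    have e1 : ∀ t : L.Term (Fin (n + 1)),
        (t.realize (fun i => prodMk (v i) (w i))).1 = t.realize v := fun t =>
      (HomClass.realize_term (prodFst A B) (t := t)
        (v := fun i => prodMk (v i) (w i))).symm
    have e2 : ∀ t : L.Term (Fin (n + 1)),
        (t.realize (fun i => prodMk (v i) (w i))).2 = t.realize w := fun t =>
      (HomClass.realize_term (prodSnd A B) (t := t)
        (v := fun i => prodMk (v i) (w i))).symm
    constructor
    · intro H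
      exact Prod.ext (by rw [e1, e1, H]) (by rw [e2, e2, hw _ _ H])
    · intro H
      rw [← e1, ← e1, H]
  obtain ⟨D₁, hD₁, j₁, k₁, hjk₁⟩ := amalg hK hAP hA hQ v _ (key w₁ h₁)
  obtain ⟨D₂, hD₂, j₂, k₂, hjk₂⟩ := amalg hK hAP hA hD₁ v
    (k₁ ∘ fun i => prodMk (v i) (w₂ i)) (by
      intro t s
      rw [HomClass.realize_term, HomClass.realize_term, k₁.injective.eq_iff]
      exact key w₂ h₂ t s)
  have r₁ := hp _ _ hA hD₂ (k₂.toHom.comp j₁.toHom) v hv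
  have r₂ := hp _ _ hA hD₂ j₂.toHom v hv
  have := hf D₂ hD₂ _ _ (fun i => ?_) r₁ r₂
  · have H : k₂ (j₁ (v (Fin.last n))) = j₂ (v (Fin.last n)) := this
    rw [hjk₁, hjk₂] at H
    have H' := k₁.injective (k₂.injective H)
    exact congrArg Prod.snd H'
  · change k₂ (j₁ (v i.castSucc)) = j₂ (v i.castSucc)
    rw [hjk₁, hjk₂, hw]
    rfl

/-- Compactness through ultraproducts. -/
theorem compact {K : Set (Alg L)} (hK : IsQuasivariety K) {J : Type u} {X : Type} [Nonempty X]
    (A : Finset J → Alg L) (hA : ∀ s, A s ∈ K) (x : ∀ s, X → (A s).carrier) :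
    ∃ B : Alg L, B ∈ K ∧ ∃ y : X → B.carrier, ∀ χ : L.Formula X,
      (∃ s₀, ∀ s, s₀ ⊆ s → χ.Realize (x s)) → χ.Realize y := by
  classical
  let U : Ultrafilter (Finset J) := Ultrafilter.of Filter.atTop
  have hne : ∀ s, Nonempty (A s).carrier := fun s => ⟨x s (Classical.arbitrary X)⟩
  refine ⟨Alg.uprod U A, hK.2.2.2 _ U A hA,
    fun i => ((fun s => x s i : ∀ s, (A s).carrier) :
      Filter.Product (U : Filter (Finset J)) fun s => (A s).carrier), ?_⟩
  rintro χ ⟨s₀, h⟩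
  refine (Ultraproduct.realize_formula_cast (u := U) χ (fun i s => x s i)).2 ?_
  have : ∀ᶠ s in Filter.atTop, χ.Realize (x s) :=
    Filter.eventually_atTop.2 ⟨s₀, fun s hs => h s hs⟩
  exact (Ultrafilter.of_le (Filter.atTop : Filter (Finset J))) this

theorem finset_conj {α : Type} (s : Finset (L.Formula α)) (hs : ∀ χ ∈ s, IsConjEq χ) :
    ∃ ψ : L.Formula α, IsConjEq ψ ∧ ∀ (M : Type u) [L.Structure M] (x : α → M),
      ψ.Realize x ↔ ∀ χ ∈ s, χ.Realize x := by
  classical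
  induction s using Finset.induction_on with
  | empty => exact ⟨⊤, IsConjEq.top, by simp⟩
  | insert a s _ ih =>
    obtain ⟨ψ, h1, h2⟩ := ih fun χ hχ => hs χ (Finset.mem_insert_of_mem hχ)
    refine ⟨a ⊓ ψ, IsConjEq.inf (hs a (Finset.mem_insert_self _ _)) h1, ?_⟩
    intro M _ x
    rw [Formula.realize_inf, h2 M x]
    simp

theorem local_interp [L.IsAlgebraic] {K : Set (Alg L)} (hK : IsQuasivariety K)
    (hAP : HasAmalgamation K) {n : ℕ} {φ : L.Formula (Fin (n + 1))} (hf : Functional K φ)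
    (hp : PreservedByHomsOn K φ) {A : Alg L} (hA : A ∈ K) (v : Fin (n + 1) → A.carrier)
    (hv : φ.Realize v) :
    ∃ ψ : L.Formula (Fin (n + 1)), IsConjEq ψ ∧ Functional K ψ ∧ ψ.Realize v := by
  classical
  let Γ := {χ : L.Formula (Fin (n + 1)) // IsConjEq χ ∧ χ.Realize v}
  have hconj : ∀ s : Finset Γ, ∃ ψ : L.Formula (Fin (n + 1)), IsConjEq ψ ∧
      ∀ (M : Type u) [L.Structure M] (x : Fin (n + 1) → M),
        ψ.Realize x ↔ ∀ χ ∈ s, χ.1.Realize x := by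
    intro s
    obtain ⟨ψ, h1, h2⟩ := finset_conj (s.image Subtype.val) (by
      intro χ hχ
      obtain ⟨γ, -, rfl⟩ := Finset.mem_image.1 hχ
      exact γ.2.1)
    refine ⟨ψ, h1, fun M _ x => ?_⟩
    rw [h2 M x]
    exact Finset.forall_mem_image
  choose Ψ hΨ hΨr using hconj
  by_contra hcon
  have hnot : ∀ s : Finset Γ, ¬ Functional K (Ψ s) := fun s hs =>
    hcon ⟨Ψ s, hΨ s, hs, (hΨr s _ v).2 fun χ _ => χ.2.2⟩
  unfold Functional at hnot
  push Not at hnot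
  choose B hB w₁ w₂ hw h₁ h₂ hne using hnot
  obtain ⟨C, hC, y, hy⟩ := compact hK (X := Fin (n + 1) ⊕ Fin (n + 1)) B hB
    (fun s => Sum.elim (w₁ s) (w₂ s))
  have eqs : ∀ (y' : Fin (n + 1) → C.carrier),
      (∀ χ : Γ, χ.1.Realize y') →
      ∀ t s : L.Term (Fin (n + 1)), t.realize v = s.realize v → t.realize y' = s.realize y' := by
    intro y' H t s hts
    have := H ⟨Term.equal t s, IsConjEq.equal _ _, by simpa using hts⟩
    simpa using this
  have := type_functional hK hAP hf hp hA v hv hC (y ∘ Sum.inl) (y ∘ Sum.inr) ?_ (eqs _ ?_)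
    (eqs _ ?_)
  · have H := hy (Term.equal (Term.var (Sum.inl (Fin.last n)))
      (Term.var (Sum.inr (Fin.last n)))).not ⟨∅, fun s _ => by
        rw [Formula.realize_not, Formula.realize_equal]
        exact hne s⟩
    rw [Formula.realize_not, Formula.realize_equal] at H
    exact H this
  · intro i
    have H := hy (Term.equal (Term.var (Sum.inl i.castSucc))
      (Term.var (Sum.inr i.castSucc))) ⟨∅, fun s _ => by
        rw [Formula.realize_equal]
        exact hw s i⟩
    rw [Formula.realize_equal] at H
    exact H
  · intro χ
    have H := hy (χ.1.relabel Sum.inl) ⟨{χ}, fun s hs => by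
      rw [Formula.realize_relabel]
      exact (hΨr s _ _).1 (h₁ s) χ (hs (Finset.mem_singleton_self χ))⟩
    rwa [Formula.realize_relabel] at H
  · intro χ
    have H := hy (χ.1.relabel Sum.inr) ⟨{χ}, fun s hs => by
      rw [Formula.realize_relabel]
      exact (hΨr s _ _).1 (h₂ s) χ (hs (Finset.mem_singleton_self χ))⟩
    rwa [Formula.realize_relabel] at H

theorem finite_interp [L.IsAlgebraic] {K : Set (Alg L)} (hK : IsQuasivariety K)
    (hAP : HasAmalgamation K) {n : ℕ} {φ : L.Formula (Fin (n + 1))} (hf : Functional K φ)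
    (hp : PreservedByHomsOn K φ) :
    ∃ (m : ℕ) (ψ : Fin m → L.Formula (Fin (n + 1))),
      (∀ j, IsConjEq (ψ j) ∧ Functional K (ψ j)) ∧
      ∀ A : Alg L, A ∈ K → ∀ v : Fin (n + 1) → A.carrier, φ.Realize v →
        ∃ j, (ψ j).Realize v := by
  classical
  let Γ := {χ : L.Formula (Fin (n + 1)) // IsConjEq χ ∧ Functional K χ}
  have main : ∃ s : Finset Γ, ∀ A : Alg L, A ∈ K → ∀ v : Fin (n + 1) → A.carrier, φ.Realize v →
      ∃ χ ∈ s, χ.1.Realize v := by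
    by_contra hcon
    push Not at hcon
    choose B hB v hv hno using hcon
    obtain ⟨C, hC, y, hy⟩ := compact hK B hB v
    obtain ⟨ψ, h1, h2, h3⟩ := local_interp hK hAP hf hp hC y (hy φ ⟨∅, fun s _ => hv s⟩)
    have := hy ψ.not ⟨{⟨ψ, h1, h2⟩}, fun s hs => by
      rw [Formula.realize_not]
      exact hno s ⟨ψ, h1, h2⟩ (hs (Finset.mem_singleton_self _))⟩
    rw [Formula.realize_not] at this
    exact this h3
  obtain ⟨s, hs⟩ := main
  refine ⟨s.card, fun j => (s.equivFin.symm j).1.1, fun j => (s.equivFin.symm j).1.2, ?_⟩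
  intro A hA v hv
  obtain ⟨χ, hχ, h⟩ := hs A hA v hv
  exact ⟨s.equivFin ⟨χ, hχ⟩, by simpa using h⟩

theorem functional_of_definedBy {K : Set (Alg L)} {n : ℕ} {g : PartialFunOn K n}
    {φ : L.Formula (Fin (n + 1))} (h : DefinedBy g φ) : Functional K φ := by
  intro A hA v w hvw hv hw
  have e : (Fin.snoc (fun i : Fin n => v i.castSucc) (w (Fin.last n)) : Fin (n + 1) → A.carrier)
      = w := by
    funext i
    refine Fin.lastCases ?_ (fun i => ?_) i <;> simp [hvw]
  have e' : (Fin.snoc (fun i : Fin n => v i.castSucc) (v (Fin.last n)) : Fin (n + 1) → A.carrier)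
      = v := by
    funext i
    refine Fin.lastCases ?_ (fun i => ?_) i <;> simp
  rw [← e'] at hv
  rw [← e] at hw
  exact Part.mem_unique ((h A hA _ _).2 hv) ((h A hA _ _).2 hw)

theorem preserved_of_definedBy {K : Set (Alg L)} {n : ℕ} {g : PartialFunOn K n}
    {φ : L.Formula (Fin (n + 1))} (h : DefinedBy g φ) (hg : IsOperationOn g) :
    PreservedByHomsOn K φ := by
  intro A B hA hB f v hv
  have e' : (Fin.snoc (fun i : Fin n => v i.castSucc) (v (Fin.last n)) : Fin (n + 1) → A.carrier)
      = v := by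
    funext i
    refine Fin.lastCases ?_ (fun i => ?_) i <;> simp
  have := (h B hB _ _).1 (hg A B hA hB f _ _ ((h A hA _ _).2 (e' ▸ hv)))
  convert this using 1
  funext i
  refine Fin.lastCases ?_ (fun i => ?_) i <;> simp

/-- The partial function defined by a formula. -/
noncomputable def opOf (K : Set (Alg L)) {n : ℕ} (ψ : L.Formula (Fin (n + 1))) :
    PartialFunOn K n :=
  fun A _ x => ⟨∃ b : A.carrier, ψ.Realize (Fin.snoc x b : Fin (n + 1) → A.carrier),
    fun h => h.choose⟩

theorem opOf_definedBy {K : Set (Alg L)} {n : ℕ} {ψ : L.Formula (Fin (n + 1))}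
    (h : Functional K ψ) : DefinedBy (opOf K ψ) ψ := by
  intro A hA x b
  constructor
  · rintro ⟨hd, rfl⟩
    exact hd.choose_spec
  · intro hb
    have hd : ∃ b : A.carrier, ψ.Realize (Fin.snoc x b : Fin (n + 1) → A.carrier) := ⟨b, hb⟩
    refine ⟨hd, ?_⟩
    have := h A hA _ _ (fun i => by simp) hd.choose_spec hb
    simp only [Fin.snoc_last] at this
    exact this

theorem opOf_operation {K : Set (Alg L)} {n : ℕ} {ψ : L.Formula (Fin (n + 1))}
    (h : Functional K ψ) (hc : IsConjEq ψ) : IsOperationOn (opOf K ψ) := by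
  intro A B hA hB f x b hb
  rw [opOf_definedBy h] at hb ⊢
  have := conjEq_hom_formula hc f _ hb
  convert this using 1
  funext i
  refine Fin.lastCases ?_ (fun i => ?_) i <;> simp

end Helpers

/-- **Existential elimination theorem.** Let `K` be a quasivariety with the
amalgamation property. Then (i) every implicit operation of `K` defined by a primitive
positive formula is interpolated by some implicit operation of `K` defined by a finite
conjunction of equations; and (ii) every implicit operation of `K` is interpolated by a finite
set of implicit operations of `K` defined by finite conjunctions of equations. -/
theorem statement_6 {L : FirstOrder.Language.{u, u}} [L.IsAlgebraic]
    {K : Set (Alg L)} (hK : IsQuasivariety K) (hAP : HasAmalgamation K) :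
    (∀ n : ℕ, 0 < n → ∀ (g : PartialFunOn K n) (φ : L.Formula (Fin (n + 1))),
      IsPP φ → DefinedBy g φ → IsOperationOn g →
        ∃ (f : PartialFunOn K n) (ψ : L.Formula (Fin (n + 1))),
          IsConjEq ψ ∧ DefinedBy f ψ ∧ IsOperationOn f ∧
            ∀ (A : Alg L) (hA : A ∈ K) (x : Fin n → A.carrier) (b : A.carrier),
              b ∈ g A hA x → b ∈ f A hA x) ∧
    (∀ n : ℕ, 0 < n → ∀ g : PartialFunOn K n, IsImplicitOp g →
      ∃ (m : ℕ) (f : Fin m → PartialFunOn K n),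
        (∀ j, ∃ ψ : L.Formula (Fin (n + 1)),
          IsConjEq ψ ∧ DefinedBy (f j) ψ ∧ IsOperationOn (f j)) ∧
        ∀ (A : Alg L) (hA : A ∈ K) (x : Fin n → A.carrier) (b : A.carrier),
          b ∈ g A hA x → ∃ j, b ∈ f j A hA x) := by
  constructor
  · intro n _ g φ hφ hg hop
    obtain ⟨m, ψ, h1, h2⟩ := finite_interp hK hAP (functional_of_definedBy hg)
      (preserved_of_definedBy hg hop)
    have main : ∃ j, ∀ A : Alg L, A ∈ K → ∀ v : Fin (n + 1) → A.carrier, φ.Realize v →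
        (ψ j).Realize v := by
      by_contra hcon
      push Not at hcon
      choose B hB v hv hno using hcon
      let C : ULift.{u} (Fin m) → Alg L := fun j => B j.down
      let y : Fin (n + 1) → (Alg.pi C).carrier := fun i j => v j.down i
      have hy : φ.Realize y := by
        refine pp_pi C hφ y _ fun j => ?_
        have := hv j.down
        unfold Formula.Realize at this
        convert this
      obtain ⟨j, hj⟩ := h2 (Alg.pi C) (hK.2.2.1 _ C fun j => hB j.down) y hy
      exact hno j (conjEq_hom_formula (h1 j).1 (piProj C ⟨j⟩) y hj)
    obtain ⟨j, hj⟩ := main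
    refine ⟨opOf K (ψ j), ψ j, (h1 j).1, opOf_definedBy (h1 j).2,
      opOf_operation (h1 j).2 (h1 j).1, ?_⟩
    intro A hA x b hb
    rw [opOf_definedBy (h1 j).2]
    exact hj A hA _ ((hg A hA x b).1 hb)
  · rintro n _ g ⟨⟨φ, hg⟩, hop⟩
    obtain ⟨m, ψ, h1, h2⟩ := finite_interp hK hAP (functional_of_definedBy hg)
      (preserved_of_definedBy hg hop)
    refine ⟨m, fun j => opOf K (ψ j), fun j => ⟨ψ j, (h1 j).1, opOf_definedBy (h1 j).2,
      opOf_operation (h1 j).2 (h1 j).1⟩, ?_⟩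
    intro A hA x b hb
    obtain ⟨j, hj⟩ := h2 A hA _ ((hg A hA x b).1 hb)
    exact ⟨j, (opOf_definedBy (h1 j).2 A hA x b).2 hj⟩

end Impl
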